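/- arXiv:1301.1025 — 2 statements merged into one kernel-verified Lean document; each statement's English description precedes it below -/
import Mathlib

section
/- Let f be holomorphic on the open ball B(0,R) ⊂ ℂ with f(0) ≠ 0, let 0 < r < R, and let α₁,…,α_N be the zeros of f in the closed ball of radius r, counted with multiplicity. Then |f(0)| · ∏_{n=1}^N (r/|α_n|) = exp( (1/2π) ∫_{-π}^{π} log|f(re^{iθ})| dθ ). -/
open Metric

/-- Jensen's formula: if `f` is holomorphic on `B(0,R)`, `f(0) ≠ 0`, `0 < r < R`,
and `α₁, …, α_N` are the zeros of `f` in the closed ball of radius `r` counted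
with multiplicity (encoded by a factorization `f z = ∏ (z - αᵢ) · g z` with `g`
holomorphic and nonvanishing on the closed ball of radius `r`), then
`|f 0| ∏ (r/|αᵢ|) = exp((1/2π) ∫_{-π}^{π} log |f(r e^{iθ})| dθ)`. -/
theorem stmt12 (R r : ℝ) (hr : 0 < r) (hrR : r < R)
    (f g : ℂ → ℂ) (N : ℕ) (α : Fin N → ℂ)
    (hf : DifferentiableOn ℂ f (ball (0 : ℂ) R))
    (hg : DifferentiableOn ℂ g (ball (0 : ℂ) R))
    (hα : ∀ i, α i ∈ closedBall (0 : ℂ) r)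
    (hgne : ∀ z ∈ closedBall (0 : ℂ) r, g z ≠ 0)
    (hfac : ∀ z ∈ ball (0 : ℂ) R, f z = (∏ i, (z - α i)) * g z)
    (hf0 : f 0 ≠ 0) :
    ‖f 0‖ * ∏ i, (r / ‖α i‖) =
      Real.exp ((1 / (2 * Real.pi)) *
        ∫ θ in (-Real.pi)..Real.pi,
          Real.log ‖f ((r : ℂ) * Complex.exp (θ * Complex.I))‖) := by
  have habs : |r| = r := abs_of_pos hr
  have hsub : closedBall (0 : ℂ) r ⊆ ball 0 R := closedBall_subset_ball hrR
  have hga : AnalyticOnNhd ℂ g (closedBall (0 : ℂ) |r|) := by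
    rw [habs]
    exact (hg.analyticOnNhd isOpen_ball).mono hsub
  have h0 : f 0 = (∏ i, (0 - α i)) * g 0 := hfac 0 (by simp; linarith)
  have hne : (∏ i, (0 - α i)) ≠ 0 := fun h => hf0 (by rw [h0, h, zero_mul])
  have hαne : ∀ i, α i ≠ 0 := by
    intro i h
    exact (Finset.prod_ne_zero_iff.mp hne i (Finset.mem_univ i)) (by simp [h])
  have hg0 : g 0 ≠ 0 := hgne 0 (by simp [hr.le])
  have hint : ∀ i, CircleIntegrable (fun z => Real.log ‖z - α i‖) 0 r := fun i =>
    (analyticOnNhd_id.sub analyticOnNhd_const).meromorphicOn.circleIntegrable_log_norm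
  have hintg : CircleIntegrable (fun z => Real.log ‖g z‖) 0 r :=
    (hga.mono sphere_subset_closedBall).meromorphicOn.circleIntegrable_log_norm
  have havg : Real.circleAverage (fun z => Real.log ‖f z‖) 0 r
      = N * Real.log r + Real.log ‖g 0‖ := by
    have h1 : Real.circleAverage (fun z => Real.log ‖f z‖) 0 r
        = Real.circleAverage (fun z => (∑ i, Real.log ‖z - α i‖) + Real.log ‖g z‖) 0 r := by
      apply Real.circleAverage_congr_codiscreteWithin _ hr.ne'
      filter_upwards [compl_finite_mem_codiscreteWithin (Set.finite_range α),
        Filter.self_mem_codiscreteWithin (sphere (0 : ℂ) |r|)] with z hz hzs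
      rw [habs] at hzs
      have hzc := sphere_subset_closedBall hzs
      have hd : ∀ i, z - α i ≠ 0 := fun i h => hz ⟨i, (sub_eq_zero.mp h).symm⟩
      rw [hfac z (hsub hzc), norm_mul, norm_prod, Real.log_mul, Real.log_prod]
      · intro i _
        exact norm_ne_zero_iff.mpr (hd i)
      · exact Finset.prod_ne_zero_iff.mpr fun i _ => norm_ne_zero_iff.mpr (hd i)
      · exact norm_ne_zero_iff.mpr (hgne z hzc)
    have hs : CircleIntegrable (fun z => ∑ i, Real.log ‖z - α i‖) 0 r := by
      have := CircleIntegrable.sum Finset.univ (fun i _ => hint i)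
      convert this using 1
      ext z
      simp
    rw [h1, Real.circleAverage_fun_add hs hintg,
      Real.circleAverage_fun_sum (fun i _ => hint i),
      hga.circleAverage_log_norm_of_ne_zero (by rwa [habs])]
    congr 1
    rw [Finset.sum_congr rfl (fun i _ =>
      circleAverage_log_norm_sub_const_of_mem_closedBall (by rw [habs]; exact hα i))]
    simp
  have hI : (1 / (2 * Real.pi)) * ∫ θ in (-Real.pi)..Real.pi,
      Real.log ‖f ((r : ℂ) * Complex.exp (θ * Complex.I))‖
      = Real.circleAverage (fun z => Real.log ‖f z‖) 0 r := by
    have hper : (fun θ : ℝ => Real.log ‖f (circleMap 0 r θ)‖).Periodic (2 * Real.pi) :=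
      fun x => by simp [periodic_circleMap 0 r x]
    have := hper.intervalIntegral_add_eq (-Real.pi) 0
    rw [zero_add, show -Real.pi + 2 * Real.pi = Real.pi by ring] at this
    rw [Real.circleAverage_def, ← this, smul_eq_mul, one_div]
    simp [circleMap]
  have hprod : (∏ i, ‖α i‖) ≠ 0 :=
    Finset.prod_ne_zero_iff.mpr fun i _ => norm_ne_zero_iff.mpr (hαne i)
  rw [hI, havg, Real.exp_add, Real.exp_log (norm_pos_iff.mpr hg0), Real.exp_nat_mul,
    Real.exp_log hr, h0, norm_mul, norm_prod, Finset.prod_div_distrib]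
  simp only [zero_sub, norm_neg, Finset.prod_const, Finset.card_univ, Fintype.card_fin]
  field_simp
end

section
/- Let γ ∈ ℂ with 0 < Re γ < n. Then the Fourier transform of the tempered distribution |x|^{-γ} on ℝⁿ equals c(γ,n) |ξ|^{γ-n}, where c(γ,n) = 2^{n-γ} π^{n/2} Γ((n-γ)/2)/Γ(γ/2). -/
open MeasureTheory
open scoped RealInnerProductSpace

lemma aux_int (n : ℕ) (s : ℝ) (h0 : 0 < s) (hn : s < n)
    (ψ : EuclideanSpace ℝ (Fin n) → ℂ) (hψ : Integrable ψ) (C : ℝ) (hC : ∀ x, ‖ψ x‖ ≤ C) :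
    Integrable (fun x => ‖x‖ ^ (-s) * ‖ψ x‖) := by
  have hnpos : 0 < n := by
    have : (0 : ℝ) < n := h0.trans hn
    exact_mod_cast this
  haveI : Nonempty (Fin n) := ⟨⟨0, hnpos⟩⟩
  haveI : Nontrivial (EuclideanSpace ℝ (Fin n)) := inferInstance
  have hb : IntegrableOn (fun x : EuclideanSpace ℝ (Fin n) => ‖x‖ ^ (-s))
      (Metric.ball 0 1) := by
    rw [integrableOn_fun_norm_addHaar volume (f := fun r : ℝ => r ^ (-s))]
    have h1 : IntegrableOn (fun r : ℝ => r ^ ((n : ℝ) - 1 - s)) (Set.Ioo 0 1) :=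
      (intervalIntegral.integrableOn_Ioo_rpow_iff one_pos).2 (by linarith)
    refine h1.congr_fun (fun r hr => ?_) measurableSet_Ioo
    have hr0 : 0 < r := hr.1
    simp only [finrank_euclideanSpace, Fintype.card_fin, smul_eq_mul]
    rw [← Real.rpow_natCast, ← Real.rpow_add hr0, Nat.cast_sub hnpos]
    congr 1
    push_cast; ring
  have hb2 : Integrable ((Metric.ball 0 1).indicator
      (fun x : EuclideanSpace ℝ (Fin n) => ‖x‖ ^ (-s) * C)) :=
    (integrable_indicator_iff measurableSet_ball).2 (hb.mul_const C)
  refine (hb2.add hψ.norm).mono' ?_ (Filter.Eventually.of_forall fun x => ?_)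
  · refine AEStronglyMeasurable.mul ?_ hψ.norm.aestronglyMeasurable
    exact (measurable_norm.pow_const _).aestronglyMeasurable
  · have h2 : 0 ≤ ‖x‖ ^ (-s) := Real.rpow_nonneg (norm_nonneg _) _
    rw [Real.norm_of_nonneg (by positivity)]
    by_cases hx : x ∈ Metric.ball (0 : EuclideanSpace ℝ (Fin n)) 1
    · simp only [Pi.add_apply, Set.indicator_of_mem hx]
      have := mul_le_mul_of_nonneg_left (hC x) h2
      linarith [norm_nonneg (ψ x)]
    · simp only [Pi.add_apply, Set.indicator_of_notMem hx, zero_add]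
      have h3 : 1 ≤ ‖x‖ := by simpa using hx
      exact mul_le_of_le_one_left (norm_nonneg _)
        (Real.rpow_le_one_of_one_le_of_nonpos h3 (by linarith))

lemma aux_mellin (n : ℕ) (a : ℂ) (h0 : 0 < a.re) (hn : 2 * a.re < n)
    (ψ : EuclideanSpace ℝ (Fin n) → ℂ) (hψ : Integrable ψ) (C : ℝ) (hC : ∀ x, ‖ψ x‖ ≤ C) :
    Complex.Gamma a * ∫ x, (‖x‖ : ℂ) ^ (-(2 * a)) * ψ x =
      mellin (fun t : ℝ => ∫ x, Complex.exp (-(t : ℂ) * (‖x‖ : ℂ) ^ 2) * ψ x) a := by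
  have hnpos : 0 < n := by
    have : (0 : ℝ) < n := by linarith
    exact_mod_cast this
  haveI : Nonempty (Fin n) := ⟨⟨0, hnpos⟩⟩
  haveI : Nontrivial (EuclideanSpace ℝ (Fin n)) := inferInstance
  have hne : ∀ᵐ x : EuclideanSpace ℝ (Fin n), x ≠ 0 := by
    simp [ae_iff]
  let F : EuclideanSpace ℝ (Fin n) → ℝ → ℂ := fun x t =>
    (t : ℂ) ^ (a - 1) * (Complex.exp (-(t : ℂ) * (‖x‖ : ℂ) ^ 2) * ψ x)
  have hnorm : ∀ x : EuclideanSpace ℝ (Fin n), ∀ t ∈ Set.Ioi (0 : ℝ), ‖F x t‖ =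
      (t ^ (a.re - 1) * Real.exp (-(‖x‖ ^ 2 * t))) * ‖ψ x‖ := by
    intro x t ht
    simp only [F, norm_mul]
    rw [Complex.norm_cpow_eq_rpow_re_of_pos ht, Complex.norm_exp]
    have : (-(t : ℂ) * (‖x‖ : ℂ) ^ 2).re = -(‖x‖ ^ 2 * t) := by
      have : (-(t : ℂ) * (‖x‖ : ℂ) ^ 2) = ((-(‖x‖ ^ 2 * t) : ℝ) : ℂ) := by push_cast; ring
      rw [this, Complex.ofReal_re]
    rw [this]
    simp [mul_assoc]
  have hmeas : AEStronglyMeasurable (Function.uncurry F)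
      (volume.prod (volume.restrict (Set.Ioi (0 : ℝ)))) := by
    refine AEStronglyMeasurable.mul ?_ (AEStronglyMeasurable.mul ?_ hψ.aestronglyMeasurable.comp_fst)
    · exact (((Complex.measurable_ofReal.comp measurable_snd)).pow_const _).aestronglyMeasurable
    · have : Continuous fun p : EuclideanSpace ℝ (Fin n) × ℝ =>
        Complex.exp (-(p.2 : ℂ) * (‖p.1‖ : ℂ) ^ 2) := by fun_prop
      exact this.aestronglyMeasurable
  have hF : Integrable (Function.uncurry F) (volume.prod (volume.restrict (Set.Ioi (0 : ℝ)))) := by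
    rw [integrable_prod_iff hmeas]
    constructor
    · filter_upwards [hne, hmeas.prodMk_left] with x hx hm
      have hx2 : 0 < ‖x‖ ^ 2 := by positivity
      have h1 := integrableOn_rpow_mul_exp_neg_mul_rpow (p := 1) (s := a.re - 1) (b := ‖x‖ ^ 2)
        (by linarith) one_pos hx2
      have h2 := h1.mul_const ‖ψ x‖
      refine h2.mono' hm ?_
      filter_upwards [ae_restrict_mem measurableSet_Ioi] with t ht
      simp only [Function.uncurry]
      rw [hnorm x t ht]
      simp
    · have h1 := (aux_int n (2 * a.re) (by linarith) hn ψ hψ C hC).const_mul (Real.Gamma a.re)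
      refine h1.congr ?_
      filter_upwards [hne] with x hx
      have hx2 : 0 < ‖x‖ ^ 2 := by positivity
      simp only [Function.uncurry]
      rw [setIntegral_congr_fun measurableSet_Ioi (hnorm x), integral_mul_const,
        Real.integral_rpow_mul_exp_neg_mul_Ioi h0 hx2]
      rw [one_div, ← Real.rpow_natCast ‖x‖ 2, ← Real.rpow_neg (norm_nonneg _),
        ← Real.rpow_mul (norm_nonneg _)]
      push_cast
      rw [show (-2 * a.re) = -(2 * a.re) by ring]
      ring
  have hswap := integral_integral_swap hF
  rw [mellin]
  simp only [F] at hswap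
  simp only [smul_eq_mul]
  simp_rw [integral_const_mul] at hswap
  rw [← hswap, ← integral_const_mul]
  refine integral_congr_ae ?_
  filter_upwards [hne] with x hx
  have hx0 : 0 < ‖x‖ := norm_pos_iff.2 hx
  have hx2 : 0 < ‖x‖ ^ 2 := by positivity
  have key := Complex.integral_cpow_mul_exp_neg_mul_Ioi h0 hx2
  have e : ∀ t : ℝ, (t : ℂ) ^ (a - 1) * (Complex.exp (-(t : ℂ) * (‖x‖ : ℂ) ^ 2) * ψ x) =
      ((t : ℂ) ^ (a - 1) * Complex.exp (-(((‖x‖ ^ 2 : ℝ) : ℂ) * t))) * ψ x := by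
    intro t
    rw [mul_assoc]
    congr 3
    push_cast; ring
  simp_rw [e]
  rw [integral_mul_const, key]
  have e2 : (1 / ((‖x‖ ^ 2 : ℝ) : ℂ)) ^ a = (‖x‖ : ℂ) ^ (-(2 * a)) := by
    have hxc : (‖x‖ : ℂ) ≠ 0 := by exact_mod_cast hx0.ne'
    have h1 : (1 / ((‖x‖ ^ 2 : ℝ) : ℂ)) = (((‖x‖ ^ 2)⁻¹ : ℝ) : ℂ) := by push_cast; simp
    have h2 : ((‖x‖ ^ 2)⁻¹ : ℝ) ≠ 0 := by positivity
    rw [h1, Complex.cpow_def_of_ne_zero (by exact_mod_cast h2),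
      Complex.cpow_def_of_ne_zero hxc, ← Complex.ofReal_log (by positivity),
      ← Complex.ofReal_log (by positivity), Real.log_inv, Real.log_pow]
    congr 1
    push_cast; ring
  rw [e2]
  ring

lemma aux_adj (n : ℕ) (φ : SchwartzMap (EuclideanSpace ℝ (Fin n)) ℂ) (t : ℝ) (ht : 0 < t) :
    ∫ x : EuclideanSpace ℝ (Fin n), Complex.exp (-(t : ℂ) * (‖x‖ : ℂ) ^ 2) *
          ∫ y : EuclideanSpace ℝ (Fin n),
            φ y * Complex.exp (-(Complex.I * (⟪y, x⟫ : ℝ))) =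
    (Real.pi : ℂ) ^ ((n : ℂ) / 2) * ((t : ℂ) ^ (-((n : ℂ) / 2)) *
      ∫ y, Complex.exp (-(((4 * t)⁻¹ : ℝ) : ℂ) * (‖y‖ : ℂ) ^ 2) * φ y) := by
  have htc : 0 < ((t : ℂ)).re := by simpa using ht
  have hg : Integrable (fun x : EuclideanSpace ℝ (Fin n) =>
      Complex.exp (-(t : ℂ) * (‖x‖ : ℂ) ^ 2)) := by
    simpa using GaussianFourier.integrable_cexp_neg_mul_sq_norm_add htc 0
      (0 : EuclideanSpace ℝ (Fin n))
  have hI : Integrable (Function.uncurry fun x y : EuclideanSpace ℝ (Fin n) =>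
      Complex.exp (-(Complex.I * (⟪y, x⟫ : ℝ))) *
        (Complex.exp (-(t : ℂ) * (‖x‖ : ℂ) ^ 2) * φ y)) (volume.prod volume) := by
    refine Integrable.bdd_mul (c := 1) (hg.mul_prod φ.integrable) ?_ ?_
    · have : Continuous fun p : EuclideanSpace ℝ (Fin n) × EuclideanSpace ℝ (Fin n) =>
        Complex.exp (-(Complex.I * (⟪p.2, p.1⟫ : ℝ))) := by fun_prop
      exact this.aestronglyMeasurable
    · refine Filter.Eventually.of_forall fun p => ?_
      simp [Complex.norm_exp]
  have hswap := integral_integral_swap hI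
  have e1 : ∀ x : EuclideanSpace ℝ (Fin n), Complex.exp (-(t : ℂ) * (‖x‖ : ℂ) ^ 2) *
          ∫ y : EuclideanSpace ℝ (Fin n),
            φ y * Complex.exp (-(Complex.I * (⟪y, x⟫ : ℝ))) =
      ∫ y, Complex.exp (-(Complex.I * (⟪y, x⟫ : ℝ))) *
        (Complex.exp (-(t : ℂ) * (‖x‖ : ℂ) ^ 2) * φ y) := by
    intro x
    rw [← integral_const_mul]
    congr 1; ext y; ring
  simp_rw [e1]
  rw [hswap, ← integral_const_mul, ← integral_const_mul]
  congr 1; ext y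
  have key := GaussianFourier.integral_cexp_neg_mul_sq_norm_add htc (-Complex.I) y
  have e2 : ∀ x : EuclideanSpace ℝ (Fin n), Complex.exp (-(Complex.I * (⟪y, x⟫ : ℝ))) *
        (Complex.exp (-(t : ℂ) * (‖x‖ : ℂ) ^ 2) * φ y) =
      Complex.exp (-(t : ℂ) * (‖x‖ : ℂ) ^ 2 + -Complex.I * (⟪y, x⟫ : ℝ)) * φ y := by
    intro x
    rw [Complex.exp_add, neg_mul Complex.I]; ring
  simp_rw [e2]
  rw [integral_mul_const, key]
  have e3 : ((Real.pi : ℂ) / t) ^ ((Module.finrank ℝ (EuclideanSpace ℝ (Fin n)) : ℂ) / 2) =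
      (Real.pi : ℂ) ^ ((n : ℂ) / 2) * (t : ℂ) ^ (-((n : ℂ) / 2)) := by
    rw [finrank_euclideanSpace, Fintype.card_fin, Complex.cpow_neg, div_eq_mul_inv,
      ← Complex.ofReal_inv, Complex.mul_cpow_ofReal_nonneg Real.pi_pos.le (by positivity),
      Complex.ofReal_inv, Complex.inv_cpow]
    rw [Complex.arg_ofReal_of_nonneg ht.le]
    exact Real.pi_pos.ne
  rw [e3]
  have e4 : (-Complex.I) ^ 2 * (‖y‖ : ℂ) ^ 2 / (4 * t) =
      -(((4 * t)⁻¹ : ℝ) : ℂ) * (‖y‖ : ℂ) ^ 2 := by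
    rw [neg_sq, Complex.I_sq]; push_cast; ring
  rw [e4]; ring

lemma aux_fourier (n : ℕ) (φ : SchwartzMap (EuclideanSpace ℝ (Fin n)) ℂ) :
    ∃ ψ : SchwartzMap (EuclideanSpace ℝ (Fin n)) ℂ, ∀ x,
      ∫ y : EuclideanSpace ℝ (Fin n), φ y * Complex.exp (-(Complex.I * (⟪y, x⟫ : ℝ))) =
        ψ ((2 * Real.pi)⁻¹ • x) := by
  refine ⟨FourierTransform.fourier φ, fun x => ?_⟩
  rw [SchwartzMap.fourier_coe, Real.fourier_eq']
  congr 1; ext y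
  rw [smul_eq_mul, mul_comm, inner_smul_right]
  congr 2
  have : (Real.pi : ℂ) ≠ 0 := by exact_mod_cast Real.pi_ne_zero
  push_cast
  field_simp

theorem stmt16 (n : ℕ) (γ : ℂ) (h0 : 0 < γ.re) (hn : γ.re < n)
    (φ : SchwartzMap (EuclideanSpace ℝ (Fin n)) ℂ) :
    ∫ x : EuclideanSpace ℝ (Fin n),
        (‖x‖ : ℂ) ^ (-γ) *
          ∫ y : EuclideanSpace ℝ (Fin n),
            φ y * Complex.exp (-(Complex.I * (⟪y, x⟫ : ℝ)))
      = (2 : ℂ) ^ ((n : ℂ) - γ) * (Real.pi : ℂ) ^ ((n : ℂ) / 2) *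
          (Complex.Gamma (((n : ℂ) - γ) / 2) / Complex.Gamma (γ / 2)) *
          ∫ ξ : EuclideanSpace ℝ (Fin n), (‖ξ‖ : ℂ) ^ (γ - (n : ℂ)) * φ ξ := by
  have hr1 : (γ / 2).re = γ.re / 2 := by simp
  have hr2 : (((n : ℂ) - γ) / 2).re = (n - γ.re) / 2 := by simp
  have hbd : ∀ f : SchwartzMap (EuclideanSpace ℝ (Fin n)) ℂ, ∃ C, ∀ x, ‖f x‖ ≤ C := fun f =>
    ⟨_, fun x => f.toBoundedContinuousFunction.norm_coe_le_norm x⟩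
  obtain ⟨ψ, hψ⟩ := aux_fourier n φ
  obtain ⟨C1, hC1⟩ := hbd ψ
  obtain ⟨C2, hC2⟩ := hbd φ
  have hΓ : Complex.Gamma (γ / 2) ≠ 0 := Complex.Gamma_ne_zero_of_re_pos (by rw [hr1]; linarith)
  have A := aux_mellin n (γ / 2) (by rw [hr1]; linarith) (by rw [hr1]; linarith)
    (fun x => ψ ((2 * Real.pi)⁻¹ • x)) (ψ.integrable.comp_smul (by positivity)) C1
    (fun x => hC1 _)
  have B := aux_mellin n (((n : ℂ) - γ) / 2) (by rw [hr2]; linarith) (by rw [hr2]; linarith)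
    φ φ.integrable C2 hC2
  simp_rw [← hψ] at A
  set G : ℝ → ℂ := fun t : ℝ => ∫ x, Complex.exp (-(t : ℂ) * (‖x‖ : ℂ) ^ 2) * φ x with hG
  have M : mellin (fun t : ℝ => ∫ x : EuclideanSpace ℝ (Fin n),
      Complex.exp (-(t : ℂ) * (‖x‖ : ℂ) ^ 2) *
          ∫ y : EuclideanSpace ℝ (Fin n),
            φ y * Complex.exp (-(Complex.I * (⟪y, x⟫ : ℝ)))) (γ / 2) =
      (Real.pi : ℂ) ^ ((n : ℂ) / 2) * ((2 : ℂ) ^ ((n : ℂ) - γ) *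
        mellin G (((n : ℂ) - γ) / 2)) := by
    have h1 : mellin (fun t : ℝ => ∫ x : EuclideanSpace ℝ (Fin n),
      Complex.exp (-(t : ℂ) * (‖x‖ : ℂ) ^ 2) *
          ∫ y : EuclideanSpace ℝ (Fin n),
            φ y * Complex.exp (-(Complex.I * (⟪y, x⟫ : ℝ)))) (γ / 2) =
        mellin (fun t : ℝ => (Real.pi : ℂ) ^ ((n : ℂ) / 2) •
          ((t : ℂ) ^ (-((n : ℂ) / 2)) • (fun u : ℝ => G (4⁻¹ * u)) t⁻¹)) (γ / 2) := by
      refine setIntegral_congr_fun measurableSet_Ioi fun t ht => ?_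
      simp only [smul_eq_mul]
      rw [aux_adj n φ t ht, mul_inv]
    rw [h1, mellin_const_smul, mellin_cpow_smul, mellin_comp_inv (fun u : ℝ => G (4⁻¹ * u)),
      mellin_comp_mul_left _ _ (by norm_num : (0 : ℝ) < 4⁻¹)]
    rw [show -(γ / 2 + -((n : ℂ) / 2)) = ((n : ℂ) - γ) / 2 by ring]
    simp only [smul_eq_mul]
    congr 2
    rw [Complex.cpow_def_of_ne_zero (by norm_num), Complex.cpow_def_of_ne_zero (by norm_num),
      ← Complex.ofReal_log (by norm_num), Real.log_inv,
      show (4 : ℝ) = 2 ^ 2 by norm_num, Real.log_pow,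
      show (2 : ℂ) = ((2 : ℝ) : ℂ) by norm_num, ← Complex.ofReal_log (by norm_num)]
    congr 1
    push_cast; ring
  rw [M, ← B] at A
  rw [show -(2 * (γ / 2)) = -γ by ring] at A
  rw [show -(2 * (((n : ℂ) - γ) / 2)) = γ - n by ring] at A
  field_simp
  linear_combination A
end
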